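/- For every integer k ≥ 4, (1/2) ∑_{j=2}^{k−2} T(j) T(k−j) = ∑_{ν=2}^{k−2} (2^{ν−1} − 1) T(k−ν, ν) + (2^{k−2} − 2) T(1, k−1). -/

import Mathlib

/-- The multiple T-value `T(k₁, …, k_r)`:
`2^r` times the sum over `0 < m₁ < ⋯ < m_r` with `m_i ≡ i (mod 2)`
of `1 / (m₁^{k₁} ⋯ m_r^{k_r})`. -/
noncomputable def MTV (k : List ℕ) : ℝ :=
  2 ^ k.length *
    ∑' f : {f : Fin k.length → ℕ // StrictMono f ∧ ∀ i, f i % 2 = ((i : ℕ) + 1) % 2},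
      ∏ i : Fin k.length, (1 : ℝ) / (f.1 i : ℝ) ^ k.get i

namespace MTVaux

/-- reciprocal of the odd number `2a+1` -/
noncomputable def X (a : ℕ) : ℝ := 1 / (2 * (a : ℝ) + 1)

/-- reciprocal of the even number `(2a+1)+(2b+1)` -/
noncomputable def Z (a b : ℕ) : ℝ := 1 / (2 * (a : ℝ) + 2 * (b : ℝ) + 2)

/-- the term of the double T-value -/
noncomputable def F (u v : ℕ) (p : ℕ × ℕ) : ℝ := X p.1 ^ u * Z p.1 p.2 ^ v

lemma X_pos (a : ℕ) : 0 < X a := by unfold X; positivity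

lemma Z_pos (a b : ℕ) : 0 < Z a b := by unfold Z; positivity

lemma X_le_one (a : ℕ) : X a ≤ 1 := by
  unfold X
  rw [div_le_one (by positivity)]
  have : (0 : ℝ) ≤ a := by positivity
  linarith

lemma Z_le_left (a b : ℕ) : Z a b ≤ X a := by
  unfold X Z
  apply one_div_le_one_div_of_le (by positivity)
  have : (0 : ℝ) ≤ b := by positivity
  linarith

lemma Z_comm (a b : ℕ) : Z a b = Z b a := by
  unfold Z; congr 1; ring

lemma Z_le_right (a b : ℕ) : Z a b ≤ X b := by
  rw [Z_comm]; exact Z_le_left b a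

lemma Z_mul (a b : ℕ) : Z a b * (X a + X b) = X a * X b := by
  unfold X Z
  have h1 : 2 * (a : ℝ) + 1 ≠ 0 := by positivity
  have h2 : 2 * (b : ℝ) + 1 ≠ 0 := by positivity
  have h3 : 2 * (a : ℝ) + 2 * (b : ℝ) + 2 ≠ 0 := by positivity
  field_simp
  ring

lemma summable_X (j : ℕ) (hj : 2 ≤ j) : Summable (fun a => X a ^ j) := by
  have h : Summable (fun n : ℕ => 1 / ((n : ℝ) ^ j)) :=
    Real.summable_one_div_nat_pow.mpr (by omega)
  have h2 := h.comp_injective (i := fun a : ℕ => 2 * a + 1) (by intro a b hab; simpa using hab)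
  refine h2.congr ?_
  intro a
  simp [X]

lemma summable_F (u v : ℕ) (hu : 1 ≤ u) (hv : 2 ≤ v) (h : 4 ≤ u + v) : Summable (F u v) := by
  have hs := (summable_X 2 le_rfl).mul_of_nonneg (summable_X 2 le_rfl)
    (fun a => by have := X_pos a; positivity) (fun a => by have := X_pos a; positivity)
  refine Summable.of_nonneg_of_le (fun p => ?_) (fun p => ?_) hs
  · have := X_pos p.1
    have := Z_pos p.1 p.2
    unfold F; positivity
  · obtain ⟨a, b⟩ := p
    have hx := X_pos a
    have hy := X_pos b
    have hz := Z_pos a b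
    have hx1 := X_le_one a
    have hz1 := Z_le_left a b
    have hz2 := Z_le_right a b
    show X a ^ u * Z a b ^ v ≤ X a ^ 2 * X b ^ 2
    rcases Nat.lt_or_ge u 2 with h2 | h2
    · obtain rfl : u = 1 := by omega
      calc X a ^ 1 * Z a b ^ v ≤ X a ^ 1 * Z a b ^ 3 := by
            gcongr ?_ * ?_
            exact pow_le_pow_of_le_one hz.le (hz1.trans hx1) (by omega)
        _ = X a * (Z a b * Z a b ^ 2) := by ring
        _ ≤ X a * (X a * X b ^ 2) := by gcongr
        _ = _ := by ring
    · calc X a ^ u * Z a b ^ v ≤ X a ^ 2 * Z a b ^ 2 := by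
            gcongr ?_ * ?_
            · exact pow_le_pow_of_le_one hx.le hx1 h2
            · exact pow_le_pow_of_le_one hz.le (hz1.trans hx1) hv
        _ ≤ _ := by gcongr

lemma MTV_one (j : ℕ) : MTV [j] = 2 * ∑' a, X a ^ j := by
  unfold MTV
  let e : ℕ → {f : Fin [j].length → ℕ // StrictMono f ∧ ∀ i, f i % 2 = ((i : ℕ) + 1) % 2} :=
    fun a => ⟨fun _ => 2 * a + 1, by
      refine ⟨Subsingleton.strictMono (α := Fin 1) _, ?_⟩
      intro (i : Fin 1)
      have : i = 0 := Subsingleton.elim _ _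
      subst this
      simp⟩
  have he : Function.Bijective e := by
    constructor
    · intro a b hab
      have := congrFun (congrArg Subtype.val hab) (0 : Fin 1)
      simp only [e] at this
      omega
    · rintro ⟨f, hf, hp⟩
      have h0 := hp (0 : Fin 1)
      refine ⟨f (0 : Fin 1) / 2, ?_⟩
      apply Subtype.ext
      funext (i : Fin 1)
      have : i = 0 := Subsingleton.elim _ _
      subst this
      simp only [e]
      simp at h0
      show 2 * (f (0 : Fin 1) / 2) + 1 = f (0 : Fin 1)
      change f (0 : Fin 1) % 2 = 1 at h0
      omega
  rw [← (Equiv.ofBijective e he).tsum_eq]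
  simp [e, X]

lemma MTV_two (u v : ℕ) : MTV [u, v] = 4 * ∑' p, F u v p := by
  unfold MTV
  let e : ℕ × ℕ →
      {f : Fin [u, v].length → ℕ // StrictMono f ∧ ∀ i, f i % 2 = ((i : ℕ) + 1) % 2} :=
    fun p => ⟨(![2 * p.1 + 1, 2 * p.1 + 2 * p.2 + 2] : Fin 2 → ℕ), by
      constructor
      · apply (Fin.strictMono_iff_lt_succ (n := 1)).mpr
        intro i
        have : i = 0 := Subsingleton.elim _ _
        subst this
        simp
      · apply (Fin.forall_fin_two (p := fun i : Fin 2 =>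
          (![2 * p.1 + 1, 2 * p.1 + 2 * p.2 + 2] : Fin 2 → ℕ) i % 2 = ((i : ℕ) + 1) % 2)).mpr
        constructor
        · simp
        · simp⟩
  have he : Function.Bijective e := by
    constructor
    · rintro ⟨a, b⟩ ⟨c, d⟩ hab
      have h0 : 2 * a + 1 = 2 * c + 1 := congrFun (congrArg Subtype.val hab) (0 : Fin 2)
      have h1 : 2 * a + 2 * b + 2 = 2 * c + 2 * d + 2 :=
        congrFun (congrArg Subtype.val hab) (1 : Fin 2)
      ext <;> simp <;> omega
    · rintro ⟨f, hf, hp⟩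
      have h0 : f (0 : Fin 2) % 2 = 1 := hp (0 : Fin 2)
      have h1 : f (1 : Fin 2) % 2 = 0 := by
        have := hp (1 : Fin 2)
        change f (1 : Fin 2) % 2 = (1 + 1) % 2 at this
        omega
      have h2 : f (0 : Fin 2) < f (1 : Fin 2) := hf (show (0 : Fin 2) < 1 by decide)
      refine ⟨(f (0 : Fin 2) / 2, (f (1 : Fin 2) - f (0 : Fin 2)) / 2), ?_⟩
      apply Subtype.ext
      funext i
      revert i
      apply (Fin.forall_fin_two (p := fun i : Fin 2 =>
        (![2 * (f (0 : Fin 2) / 2) + 1, 2 * (f (0 : Fin 2) / 2)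
          + 2 * ((f (1 : Fin 2) - f (0 : Fin 2)) / 2) + 2] : Fin 2 → ℕ) i = f i)).mpr
      constructor
      · show 2 * (f (0 : Fin 2) / 2) + 1 = f (0 : Fin 2)
        omega
      · show 2 * (f (0 : Fin 2) / 2)
          + 2 * ((f (1 : Fin 2) - f (0 : Fin 2)) / 2) + 2 = f (1 : Fin 2)
        omega
  rw [← (Equiv.ofBijective e he).tsum_eq]
  congr 1
  · norm_num
  · apply tsum_congr
    intro p
    refine (Fin.prod_univ_two _).trans ?_
    simp only [F, X, Z, e, Equiv.ofBijective_apply]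
    simp

/-- Full geometric sum. -/
lemma H_eq (x y z : ℝ) (hxy : x + y ≠ 0) (h : z * (x + y) = x * y) (m : ℕ) :
    ∑ i ∈ Finset.range (m + 1), x ^ (i + 1) * y ^ (m - i + 1)
      = ∑ i ∈ Finset.range (m + 1), 2 ^ i * ((x ^ (m - i + 1) + y ^ (m - i + 1)) * z ^ (i + 1)) := by
  induction m with
  | zero => simp; linarith
  | succ m ih =>
    have hR : ∑ i ∈ Finset.range (m + 1 + 1),
        (2 : ℝ) ^ i * ((x ^ (m + 1 - i + 1) + y ^ (m + 1 - i + 1)) * z ^ (i + 1))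
        = z * (x ^ (m + 2) + y ^ (m + 2)) + 2 * z *
          ∑ i ∈ Finset.range (m + 1), 2 ^ i * ((x ^ (m - i + 1) + y ^ (m - i + 1)) * z ^ (i + 1)) := by
      rw [Finset.sum_range_succ', Finset.mul_sum, add_comm]
      congr 1
      · simp; ring
      · apply Finset.sum_congr rfl
        intro i hi
        rw [show m + 1 - (i + 1) = m - i by omega]
        ring
    rw [hR, ← ih]
    set H := ∑ i ∈ Finset.range (m + 1), x ^ (i + 1) * y ^ (m - i + 1) with hH
    have h1 : x * ∑ i ∈ Finset.range (m + 1 + 1), x ^ (i + 1) * y ^ (m + 1 - i + 1)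
        = x * y * x ^ (m + 2) + x * y * H := by
      rw [Finset.sum_range_succ, hH, Finset.mul_sum, mul_add, Finset.mul_sum, add_comm]
      congr 1
      · simp; ring
      · apply Finset.sum_congr rfl
        intro i hi
        have := Finset.mem_range.mp hi
        rw [show m + 1 - i = m - i + 1 by omega]
        ring
    have h2 : y * ∑ i ∈ Finset.range (m + 1 + 1), x ^ (i + 1) * y ^ (m + 1 - i + 1)
        = x * y * y ^ (m + 2) + x * y * H := by
      rw [Finset.sum_range_succ', hH, Finset.mul_sum, mul_add, Finset.mul_sum, add_comm]
      congr 1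
      · simp; ring
      · apply Finset.sum_congr rfl
        intro i hi
        rw [show m + 1 - (i + 1) = m - i by omega]
        ring
    apply mul_left_cancel₀ hxy
    rw [add_mul, h1, h2]
    linear_combination (-(x ^ (m + 2) + y ^ (m + 2)) - 2 * H) * h

/-- The two boundary terms. -/
lemma P_eq (x y z : ℝ) (h : z * (x + y) = x * y) (m : ℕ) :
    x * y ^ (m + 1) + x ^ (m + 1) * y
      = ∑ i ∈ Finset.range (m + 1), ((x ^ (m - i + 1) + y ^ (m - i + 1)) * z ^ (i + 1))
        + z ^ (m + 1) * (x + y) := by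
  induction m with
  | zero => simp; linarith
  | succ m ih =>
    rw [Finset.sum_range_succ']
    have : ∑ i ∈ Finset.range (m + 1),
        ((x ^ (m + 1 - (i + 1) + 1) + y ^ (m + 1 - (i + 1) + 1)) * z ^ (i + 1 + 1))
        = z * ∑ i ∈ Finset.range (m + 1),
          ((x ^ (m - i + 1) + y ^ (m - i + 1)) * z ^ (i + 1)) := by
      rw [Finset.mul_sum]
      apply Finset.sum_congr rfl
      intro i hi
      rw [show m + 1 - (i + 1) = m - i by omega]
      ring
    rw [this]
    simp only [Nat.sub_zero, zero_add]
    linear_combination z * ih - (y ^ (m + 1) + x ^ (m + 1)) * h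

lemma key (x y z : ℝ) (hxy : x + y ≠ 0) (h : z * (x + y) = x * y) (k : ℕ) (hk : 4 ≤ k) :
    ∑ j ∈ Finset.Icc 2 (k - 2), x ^ j * y ^ (k - j)
      = ∑ ν ∈ Finset.Icc 2 (k - 2),
          ((2 : ℝ) ^ (ν - 1) - 1) * (x ^ (k - ν) * z ^ ν + y ^ (k - ν) * z ^ ν)
        + ((2 : ℝ) ^ (k - 2) - 2) * (x ^ 1 * z ^ (k - 1) + y ^ 1 * z ^ (k - 1)) := by
  obtain ⟨m, rfl⟩ := Nat.exists_eq_add_of_le' hk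
  have hH := H_eq x y z hxy h (m + 2)
  have hP := P_eq x y z h (m + 2)
  have hI : Finset.Icc 2 (m + 4 - 2) = Finset.Ico 2 (m + 3) := by
    ext i; simp only [Finset.mem_Icc, Finset.mem_Ico]; omega
  rw [hI, Finset.sum_Ico_eq_sum_range, Finset.sum_Ico_eq_sum_range]
  rw [show m + 3 - 2 = m + 1 by omega, show m + 4 - 2 = m + 2 by omega,
    show m + 4 - 1 = m + 3 by omega]
  simp only [Finset.sum_range_succ _ (m + 2), Finset.sum_range_succ' _ (m + 1)] at hH
  rw [Finset.sum_range_succ, Finset.sum_range_succ'] at hP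
  have e1 : ∑ i ∈ Finset.range (m + 1), x ^ (2 + i) * y ^ (m + 4 - (2 + i))
      = ∑ i ∈ Finset.range (m + 1), x ^ (i + 1 + 1) * y ^ (m + 2 - (i + 1) + 1) := by
    apply Finset.sum_congr rfl
    intro i hi
    have := Finset.mem_range.mp hi
    congr 2 <;> omega
  have e2 : ∑ i ∈ Finset.range (m + 1), ((2 : ℝ) ^ (2 + i - 1) - 1) *
        (x ^ (m + 4 - (2 + i)) * z ^ (2 + i) + y ^ (m + 4 - (2 + i)) * z ^ (2 + i))
      = ∑ i ∈ Finset.range (m + 1), (2 : ℝ) ^ (i + 1) *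
          ((x ^ (m + 2 - (i + 1) + 1) + y ^ (m + 2 - (i + 1) + 1)) * z ^ (i + 1 + 1))
        - ∑ i ∈ Finset.range (m + 1),
          ((x ^ (m + 2 - (i + 1) + 1) + y ^ (m + 2 - (i + 1) + 1)) * z ^ (i + 1 + 1)) := by
    rw [← Finset.sum_sub_distrib]
    apply Finset.sum_congr rfl
    intro i hi
    have := Finset.mem_range.mp hi
    rw [show m + 4 - (2 + i) = m + 2 - (i + 1) + 1 by omega, show 2 + i - 1 = i + 1 by omega,
      show 2 + i = i + 1 + 1 by omega]
    ring
  rw [e1, e2]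
  simp only [Nat.sub_zero, Nat.sub_self, zero_add, pow_one, pow_zero] at hH hP ⊢
  linear_combination hH - hP

end MTVaux

open MTVaux

/-- **Lemma.** For every integer `k ≥ 4`,
`(1/2) ∑_{j=2}^{k−2} T(j) T(k−j)
  = ∑_{ν=2}^{k−2} (2^{ν−1} − 1) T(k−ν, ν) + (2^{k−2} − 2) T(1, k−1)`. -/
theorem MTV_sum_of_products (k : ℕ) (hk : 4 ≤ k) :
    (1 / 2) * ∑ j ∈ Finset.Icc 2 (k - 2), MTV [j] * MTV [k - j]
      = (∑ ν ∈ Finset.Icc 2 (k - 2), ((2 : ℝ) ^ (ν - 1) - 1) * MTV [k - ν, ν])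
        + ((2 : ℝ) ^ (k - 2) - 2) * MTV [1, k - 1] := by
  have hX : ∀ j ∈ Finset.Icc 2 (k - 2),
      Summable (fun p : ℕ × ℕ => X p.1 ^ j * X p.2 ^ (k - j)) ∧
      MTV [j] * MTV [k - j] = 4 * ∑' p : ℕ × ℕ, X p.1 ^ j * X p.2 ^ (k - j) := by
    intro j hj
    rw [Finset.mem_Icc] at hj
    have s1 := summable_X j hj.1
    have s2 := summable_X (k - j) (by omega)
    have s := s1.mul_of_nonneg s2
      (fun a => by have := X_pos a; positivity) (fun a => by have := X_pos a; positivity)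
    refine ⟨s, ?_⟩
    rw [MTV_one, MTV_one, ← s1.tsum_mul_tsum s2 s]
    ring
  have hF : ∀ u v : ℕ, 1 ≤ u → 2 ≤ v → 4 ≤ u + v →
      HasSum (fun p : ℕ × ℕ => X p.1 ^ u * Z p.1 p.2 ^ v + X p.2 ^ u * Z p.1 p.2 ^ v)
        (MTV [u, v] / 2) := by
    intro u v hu hv huv
    have s := (summable_F u v hu hv huv).hasSum
    have s' := (Equiv.prodComm ℕ ℕ).hasSum_iff.mpr s
    have e : MTV [u, v] / 2 = (∑' p, F u v p) + ∑' p, F u v p := by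
      rw [MTV_two]; ring
    rw [e]
    refine (s.add s').congr_fun ?_
    intro p
    simp [F, Z_comm p.2 p.1]
  have hL : HasSum (fun p : ℕ × ℕ => ∑ j ∈ Finset.Icc 2 (k - 2), X p.1 ^ j * X p.2 ^ (k - j))
      (∑ j ∈ Finset.Icc 2 (k - 2), ∑' p : ℕ × ℕ, X p.1 ^ j * X p.2 ^ (k - j)) :=
    hasSum_sum fun j hj => (hX j hj).1.hasSum
  have hR1 := hasSum_sum (s := Finset.Icc 2 (k - 2)) (fun ν hν =>
    (hF (k - ν) ν (by rw [Finset.mem_Icc] at hν; omega) (by rw [Finset.mem_Icc] at hν; omega)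
      (by rw [Finset.mem_Icc] at hν; omega)).mul_left ((2 : ℝ) ^ (ν - 1) - 1))
  have hR2 := (hF 1 (k - 1) le_rfl (by omega) (by omega)).mul_left ((2 : ℝ) ^ (k - 2) - 2)
  have hR := hR1.add hR2
  have heq : (fun p : ℕ × ℕ => ∑ j ∈ Finset.Icc 2 (k - 2), X p.1 ^ j * X p.2 ^ (k - j)) = _ :=
    funext fun p => key (X p.1) (X p.2) (Z p.1 p.2)
      (add_pos (X_pos _) (X_pos _)).ne' (Z_mul _ _) k hk
  rw [heq] at hL
  have hfin := hL.unique hR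
  rw [Finset.sum_congr rfl (fun j hj => (hX j hj).2), ← Finset.mul_sum, hfin]
  have : ∑ ν ∈ Finset.Icc 2 (k - 2), ((2 : ℝ) ^ (ν - 1) - 1) * (MTV [k - ν, ν] / 2)
      = (∑ ν ∈ Finset.Icc 2 (k - 2), ((2 : ℝ) ^ (ν - 1) - 1) * MTV [k - ν, ν]) / 2 := by
    rw [Finset.sum_div]
    apply Finset.sum_congr rfl
    intro ν _
    ring
  rw [this]
  ring
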